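/- Let H be a Hilbert space, A : H → H a compact self-adjoint continuous linear operator, μ and α > 0 real numbers, and u ∈ H with ‖u‖ = 1 such that ‖A u − μ u‖ ≤ α. Then for every d > α there exists a vector ū ∈ H with ‖ū‖ = 1 and ‖u − ū‖ ≤ 2α/d such that ū belongs to the closure of the linear span of all eigenvectors of A whose eigenvalues lie in the segment [μ − d, μ + d]. -/

import Mathlib

open Module.End in
/-- A compact self-adjoint operator on a Hilbert space has a Hilbert basis of eigenvectors. -/
theorem IsCompactOperator.exists_hilbertBasis_eigenvectors.{u}
    {H : Type u} [NormedAddCommGroup H] [InnerProductSpace ℝ H] [CompleteSpace H]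
    {A : H →L[ℝ] H} (hAcomp : IsCompactOperator A) (hA : IsSelfAdjoint A) :
    ∃ (ι : Type u) (b : HilbertBasis ι ℝ H) (c : ι → ℝ), ∀ i, A (b i) = c i • b i := by
  have hsymm := hA.isSymmetric
  have hcomplete (t : ℝ) : CompleteSpace (eigenspace (A : Module.End ℝ H) t) := by
    refine IsClosed.completeSpace_coe (hs := ?_)
    have : (eigenspace (A : Module.End ℝ H) t : Set H) = {x | A x = t • x} := by
      ext x
      simp
    rw [this]
    exact isClosed_eq A.continuous (continuous_const_smul t)
  choose w e _ using fun t : ℝ ↦ exists_hilbertBasis ℝ (eigenspace (A : Module.End ℝ H) t)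
  let v : (Σ t, w t) → H := fun a ↦ e a.1 a.2
  have hv : Orthonormal ℝ v :=
    hsymm.orthogonalFamily_eigenspaces.orthonormal_sigma_orthonormal fun t ↦ (e t).orthonormal
  have hbot : (Submodule.span ℝ (Set.range v))ᗮ = ⊥ := by
    rw [← ContinuousLinearMap.orthogonalComplement_iSup_eigenspaces_eq_bot hAcomp hsymm]
    refine le_antisymm ?_ (Submodule.orthogonal_le (Submodule.span_le.2 ?_))
    · intro x hx
      rw [← Submodule.iInf_orthogonal, Submodule.mem_iInf]
      intro t y hy
      have hsum := (e t).hasSum_inner_mul_inner ⟨y, hy⟩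
        ((eigenspace (A : Module.End ℝ H) t).orthogonalProjectionOnto x)
      simp only [Submodule.inner_orthogonalProjectionOnto_eq_of_mem_left] at hsum
      refine hsum.unique ?_
      convert! hasSum_zero using 2 with i
      rw [hx (v ⟨t, i⟩) (Submodule.subset_span ⟨_, rfl⟩), mul_zero]
    · rintro _ ⟨a, rfl⟩
      exact Submodule.mem_iSup_of_mem a.1 (e a.1 a.2).2
  refine ⟨_, HilbertBasis.mkOfOrthogonalEqBot hv hbot, Sigma.fst, fun a ↦ ?_⟩
  rw [HilbertBasis.coe_mkOfOrthogonalEqBot]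
  exact mem_eigenspace_iff.1 (e a.1 a.2).2

/-- Bessel-type comparison: coefficientwise domination in a Hilbert basis gives norm domination. -/
theorem HilbertBasis.norm_le_norm_of_abs_inner_le
    {ι H : Type*} [NormedAddCommGroup H] [InnerProductSpace ℝ H]
    (b : HilbertBasis ι ℝ H) {x y : H} (h : ∀ i, |inner ℝ (b i) x| ≤ |inner ℝ (b i) y|) :
    ‖x‖ ≤ ‖y‖ := by
  rw [← sq_le_sq₀ (norm_nonneg x) (norm_nonneg y), ← real_inner_self_eq_norm_sq,
    ← real_inner_self_eq_norm_sq]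
  refine hasSum_le (fun i ↦ ?_) (b.hasSum_inner_mul_inner x x) (b.hasSum_inner_mul_inner y y)
  rw [real_inner_comm, real_inner_comm (b i) y, ← pow_two, ← pow_two]
  exact sq_le_sq.2 (h i)

/-- Normalizing an approximation `p` of a unit vector `u` at most doubles the error. -/
theorem norm_sub_normalize_le {H : Type*} [NormedAddCommGroup H] [NormedSpace ℝ H]
    {u p : H} (hu : ‖u‖ = 1) (hp : p ≠ 0) : ‖u - ‖p‖⁻¹ • p‖ ≤ 2 * ‖u - p‖ := by
  have hp' : ‖p‖ ≠ 0 := norm_ne_zero_iff.2 hp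
  have h : ‖p - ‖p‖⁻¹ • p‖ ≤ ‖u - p‖ := by
    have : p - ‖p‖⁻¹ • p = (1 - ‖p‖⁻¹) • p := by rw [sub_smul, one_smul]
    rw [this, norm_smul, Real.norm_eq_abs, ← abs_norm p, ← abs_mul, abs_norm, sub_mul,
      inv_mul_cancel₀ hp', one_mul, ← hu, abs_sub_comm]
    exact abs_norm_sub_norm_le u p
  linarith [norm_sub_le_norm_sub_add_norm_sub u p (‖p‖⁻¹ • p)]

/-- Vishik–Lyusternik lemma (second part, Lemma 3.3 of the paper): if `A` is a
compact self-adjoint operator on a Hilbert space, `α > 0`, and `u` is a unit vector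
with `‖A u - μ u‖ ≤ α`, then for every `d > α` there is a unit vector `ū` with
`‖u - ū‖ ≤ 2α/d` lying in the closed span of the eigenvectors of `A` whose
eigenvalues belong to the segment `[μ - d, μ + d]`. -/
theorem exists_near_unit_vector_in_span_of_eigenvectors
    {H : Type*} [NormedAddCommGroup H] [InnerProductSpace ℝ H] [CompleteSpace H]
    (A : H →L[ℝ] H) (hA : IsSelfAdjoint A) (hAcomp : IsCompactOperator A)
    (μ α : ℝ) (hα : 0 < α)
    (u : H) (hu : ‖u‖ = 1) (hclose : ‖A u - μ • u‖ ≤ α) :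
    ∀ d : ℝ, α < d →
      ∃ ubar : H, ‖ubar‖ = 1 ∧ ‖u - ubar‖ ≤ 2 * α / d ∧
        ubar ∈ closure (Submodule.span ℝ
          {v : H | v ≠ 0 ∧ ∃ t ∈ Set.Icc (μ - d) (μ + d), A v = t • v} : Set H) := by
  intro d hd
  have hd0 : 0 < d := hα.trans hd
  obtain ⟨ι, b, c, hb⟩ := hAcomp.exists_hilbertBasis_eigenvectors hA
  set S := Submodule.span ℝ {v : H | v ≠ 0 ∧ ∃ t ∈ Set.Icc (μ - d) (μ + d), A v = t • v}
  set K := S.topologicalClosure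
  set p := K.starProjection u
  have hpK : p ∈ K := K.starProjection_apply_mem u
  have hne (i : ι) : b i ≠ 0 := b.orthonormal.ne_zero i
  have hcoeff (i : ι) : inner ℝ (b i) (A u - μ • u) = (c i - μ) * inner ℝ (b i) u := by
    have h : inner ℝ (b i) (A u) = inner ℝ (A (b i)) u := (hA.isSymmetric (b i) u).symm
    rw [inner_sub_right, h, hb, real_inner_smul_left, real_inner_smul_right, sub_mul]
  have hnear (i : ι) (hi : |c i - μ| ≤ d) : inner ℝ (b i) (u - p) = 0 := by
    refine K.sub_starProjection_mem_orthogonal u (b i)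
      (S.le_topologicalClosure (Submodule.subset_span ⟨hne i, c i, ?_, hb i⟩))
    rw [abs_le] at hi
    exact ⟨by linarith, by linarith⟩
  have hfar (i : ι) (hi : d < |c i - μ|) : inner ℝ (b i) p = 0 := by
    have hle : K ≤ (Submodule.span ℝ {b i})ᗮ := by
      refine S.topologicalClosure_minimal (Submodule.span_le.2 ?_)
        (Submodule.isClosed_orthogonal _)
      rintro v ⟨-, t, ht, hv⟩
      refine Submodule.mem_orthogonal_singleton_iff_inner_right.2 ?_
      have h : inner ℝ (A (b i)) v = inner ℝ (b i) (A v) := hA.isSymmetric (b i) v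
      rw [hb, hv, real_inner_smul_left, real_inner_smul_right] at h
      have hct : c i - t ≠ 0 := by
        intro h0
        rw [sub_eq_zero.1 h0] at hi
        exact hi.not_ge (abs_le.2 ⟨by linarith [ht.1], by linarith [ht.2]⟩)
      exact (mul_eq_zero.1 (by linarith : (c i - t) * inner ℝ (b i) v = 0)).resolve_left hct
    exact Submodule.mem_orthogonal_singleton_iff_inner_right.1 (hle hpK)
  have hdist : d * ‖u - p‖ ≤ α := by
    refine le_trans ?_ hclose
    rw [← abs_of_pos hd0, ← Real.norm_eq_abs, ← norm_smul]
    refine b.norm_le_norm_of_abs_inner_le fun i ↦ ?_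
    rw [hcoeff, real_inner_smul_right]
    rcases le_or_gt |c i - μ| d with hi | hi
    · rw [hnear i hi, mul_zero, abs_zero]
      exact abs_nonneg _
    · rw [inner_sub_right, hfar i hi, sub_zero, abs_mul, abs_mul, abs_of_pos hd0]
      gcongr
  have hdist' : ‖u - p‖ ≤ α / d := (le_div_iff₀' hd0).2 hdist
  have hp0 : p ≠ 0 := by
    intro h
    rw [h, sub_zero, hu] at hdist
    linarith
  refine ⟨‖p‖⁻¹ • p, norm_smul_inv_norm hp0, ?_, ?_⟩
  · refine (norm_sub_normalize_le hu hp0).trans ?_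
    rw [mul_div_assoc]
    gcongr
  · exact K.smul_mem _ hpK
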